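/- Let T = {1243, 2431, 3412} (patterns of length 4). Then the generating function for T-avoiders satisfies, as formal power series over ℚ, (1-x)^4·(1-2x)·(1-3x+x^2)^2·F_T(x) = 1 - 11x + 51x^2 - 129x^3 + 195x^4 - 183x^5 + 104x^6 - 30x^7 + 3x^8; that is, F_T(x) = (1-11x+51x^2-129x^3+195x^4-183x^5+104x^6-30x^7+3x^8)/((1-x)^4(1-2x)(1-3x+x^2)^2). -/

import Mathlib

open PowerSeries

/-- A permutation `π` of `{0,…,n-1}` contains the pattern `σ` (of length `k`) if there is an
order-embedding of positions on which the values of `π` appear in the same relative order as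
the values of `σ`. -/
def ContainsPattern {n k : ℕ} (π : Equiv.Perm (Fin n)) (σ : Fin k → Fin k) : Prop :=
  ∃ f : Fin k ↪o Fin n, ∀ a b : Fin k, σ a < σ b ↔ π (f a) < π (f b)

/-- The number of permutations of length `n` avoiding every pattern in `T`. -/
noncomputable def avoiderCount (T : Set (Fin 4 → Fin 4)) (n : ℕ) : ℕ :=
  Nat.card {π : Equiv.Perm (Fin n) // ∀ σ ∈ T, ¬ ContainsPattern π σ}

/-- The generating function `F_T(x) = ∑_n |S_n(T)| xⁿ` over `ℚ`. -/
noncomputable def avoiderGF (T : Set (Fin 4 → Fin 4)) : PowerSeries ℚ :=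
  PowerSeries.mk fun n => (avoiderCount T n : ℚ)

/-- The generating function of the Catalan numbers over `ℚ`. -/
noncomputable def catalanGF : PowerSeries ℚ :=
  PowerSeries.mk fun n => (catalan n : ℚ)



theorem gf_alg {R : Type*} [CommRing R] (x r s t : R) (hr : r * (1 - x) = 1)
    (hs : s * (1 - 2*x) = 1) (ht : t * (1 - 3*x+x^2) = 1) :
    (1 - x)^4 * (1 - 2*x) * (1 - 3*x + x^2)^2 * (1 + x * (s * x * (r + x*r^3 - 2*r^2 - r) +
       (t * (1 + x^2 * t) + t * x * r) + r * x * (r^2 - (r + x*r^3)))) =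
     1 - 11*x + 51*x^2 - 129*x^3 + 195*x^4 - 183*x^5 + 104*x^6 - 30*x^7 + 3*x^8 := by
  have h1 : (1-x)^4*r^4 = 1 := by rw [← mul_pow, mul_comm, hr, one_pow]
  have h2 : (1-x)^4*r^3 = (1-x) := by linear_combination (1-x)*((1-x)^2*r^2+(1-x)*r+1)*hr
  have h3 : (1-x)^4*r^2 = (1-x)^2 := by linear_combination (1-x)^2*((1-x)*r+1)*hr
  have h4 : (1-x)^4*r = (1-x)^3 := by linear_combination (1-x)^3*hr
  have k1 : (1-3*x+x^2)^2*t^2 = 1 := by rw [← mul_pow, mul_comm, ht, one_pow]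
  have k2 : (1-3*x+x^2)^2*t = (1-3*x+x^2) := by linear_combination (1-3*x+x^2)*ht
  generalize h : (1-x)^4 = a at *
  generalize hh : (1 - 3*x+x^2)^2 = c at *
  generalize hhh : (1 - 2*x) = b at *
  have e : a * b * c * (1 + x * (s * x * (r + x*r^3 - 2*r^2 - r) +
       (t * (1 + x^2 * t) + t * x * r) + r * x * (r^2 - (r + x*r^3)))) = a*b*c + x*((s*b)*x*c*(x*(a*r^3)-2*(a*r^2)) + b*(a*(c*t) + a*x^2*(c*t^2) + (c*t)*x*(a*r)) + x*b*c*(a*r^3 - (a*r^2) - x*(a*r^4))) := by ring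
  rw [e, h1,h2,h3,h4,k1,k2,hs,← h, ← hh, ← hhh]
  ring

def sh (v x : ℕ) : ℕ := if x < v then x else x + 1
def ins (v : ℕ) (L : List ℕ) : List ℕ := v :: L.map (sh v)
def Al (L : List ℕ) (v : ℕ) : Prop := ∀ a b c, [a,b,c].Sublist L →
  (a < c → c < b → a < v ∧ v ≤ b) ∧ (b < c → c < a → ¬ (c < v ∧ v ≤ a))
def Av (L : List ℕ) : Prop := ∀ a b c d, [a,b,c,d].Sublist L →
  ¬ (a < b ∧ b < d ∧ d < c) ∧ ¬ (b < d ∧ d < c ∧ c < a) ∧ ¬ (c < d ∧ d < a ∧ a < b)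

theorem sub4_ins {v a b c d : ℕ} {L : List ℕ} : [a,b,c,d].Sublist (ins v L) ↔
    (∃ a' b' c' d', [a',b',c',d'].Sublist L ∧ a = sh v a' ∧ b = sh v b' ∧ c = sh v c' ∧ d = sh v d') ∨
    (a = v ∧ ∃ b' c' d', [b',c',d'].Sublist L ∧ b = sh v b' ∧ c = sh v c' ∧ d = sh v d') := by
  unfold ins
  rw [List.sublist_cons_iff]
  simp only [List.sublist_map_iff]
  constructor
  · rintro (⟨l, h1, h2⟩ | ⟨r, h1, l, h2, h3⟩)
    · match l, h2 with
      | [a',b',c',d'], h2 => left; simp at h2; exact ⟨a',b',c',d',h1,h2⟩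
    · simp at h1; obtain ⟨rfl, rfl⟩ := h1
      match l, h3 with
      | [b',c',d'], h3 => right; simp at h3; exact ⟨rfl, b',c',d',h2,h3⟩
  · rintro (⟨a',b',c',d',h,rfl,rfl,rfl,rfl⟩ | ⟨rfl,b',c',d',h,rfl,rfl,rfl⟩)
    · left; exact ⟨_, h, by simp⟩
    · right; exact ⟨_, rfl, _, h, by simp⟩

theorem sub3_ins {v b c d : ℕ} {L : List ℕ} : [b,c,d].Sublist (ins v L) ↔
    (∃ b' c' d', [b',c',d'].Sublist L ∧ b = sh v b' ∧ c = sh v c' ∧ d = sh v d') ∨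
    (b = v ∧ ∃ c' d', [c',d'].Sublist L ∧ c = sh v c' ∧ d = sh v d') := by
  unfold ins
  rw [List.sublist_cons_iff]
  simp only [List.sublist_map_iff]
  constructor
  · rintro (⟨l, h1, h2⟩ | ⟨r, h1, l, h2, h3⟩)
    · match l, h2 with
      | [b',c',d'], h2 => left; simp at h2; exact ⟨b',c',d',h1,h2⟩
    · simp at h1; obtain ⟨rfl, rfl⟩ := h1
      match l, h3 with
      | [c',d'], h3 => right; simp at h3; exact ⟨rfl, c',d',h2,h3⟩
  · rintro (⟨b',c',d',h,rfl,rfl,rfl⟩ | ⟨rfl,c',d',h,rfl,rfl⟩)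
    · left; exact ⟨_, h, by simp⟩
    · right; exact ⟨_, rfl, _, h, by simp⟩

theorem sub2_ins {v c d : ℕ} {L : List ℕ} : [c,d].Sublist (ins v L) ↔
    (∃ c' d', [c',d'].Sublist L ∧ c = sh v c' ∧ d = sh v d') ∨
    (c = v ∧ ∃ d', d' ∈ L ∧ d = sh v d') := by
  unfold ins
  rw [List.sublist_cons_iff]
  simp only [List.sublist_map_iff]
  constructor
  · rintro (⟨l, h1, h2⟩ | ⟨r, h1, l, h2, h3⟩)
    · match l, h2 with
      | [c',d'], h2 => left; simp at h2; exact ⟨c',d',h1,h2⟩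
    · simp at h1; obtain ⟨rfl, rfl⟩ := h1
      match l, h3 with
      | [d'], h3 => right; simp at h3; exact ⟨rfl, d', by simpa using h2,h3⟩
  · rintro (⟨c',d',h,rfl,rfl⟩ | ⟨rfl,d',h,rfl⟩)
    · left; exact ⟨_, h, by simp⟩
    · right; exact ⟨_, rfl, [d'], by simpa using h, by simp⟩

theorem sh_lt {v x y : ℕ} : sh v x < sh v y ↔ x < y := by unfold sh; split_ifs <;> omega
theorem sh_lt_self {v x : ℕ} : sh v x < v ↔ x < v := by unfold sh; split_ifs <;> omega
theorem lt_sh_self {v x : ℕ} : v < sh v x ↔ v ≤ x := by unfold sh; split_ifs <;> omega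

theorem Av_ins {v : ℕ} {L : List ℕ} : Av (ins v L) ↔ Av L ∧ Al L v := by
  constructor
  · intro h
    constructor
    · intro a b c d hs
      have := h _ _ _ _ (sub4_ins.2 (Or.inl ⟨a,b,c,d,hs,rfl,rfl,rfl,rfl⟩))
      simpa only [sh_lt] using this
    · intro a b c hs
      have := h _ _ _ _ (sub4_ins.2 (Or.inr ⟨rfl,a,b,c,hs,rfl,rfl,rfl⟩))
      simp only [sh_lt, sh_lt_self, lt_sh_self] at this
      omega
  · rintro ⟨h1, h2⟩ a b c d hs
    rcases sub4_ins.1 hs with (⟨a',b',c',d',h,rfl,rfl,rfl,rfl⟩ | ⟨rfl,b',c',d',h,rfl,rfl,rfl⟩)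
    · simpa only [sh_lt] using h1 _ _ _ _ h
    · have := h2 _ _ _ h
      simp only [sh_lt, sh_lt_self, lt_sh_self]
      omega

theorem Al_le {v w : ℕ} {L : List ℕ} (hw : w ≤ v) : Al (ins v L) w ↔
    Al L w ∧ ∀ b c, [b,c].Sublist L → ¬ (v ≤ c ∧ c < b) ∧ ¬ (b < c ∧ c < v ∧ c < w) := by
  have key : ∀ x, (sh v x < w ↔ x < w) ∧ (w ≤ sh v x ↔ w ≤ x) := by
    intro x; unfold sh; split_ifs <;> omega
  constructor
  · intro h
    constructor
    · intro a b c hs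
      have := h _ _ _ (sub3_ins.2 (Or.inl ⟨a,b,c,hs,rfl,rfl,rfl⟩))
      simpa only [sh_lt, key] using this
    · intro b c hs
      have := h _ _ _ (sub3_ins.2 (Or.inr ⟨rfl,b,c,hs,rfl,rfl⟩))
      simp only [sh_lt, sh_lt_self, lt_sh_self, key] at this
      omega
  · rintro ⟨h1, h2⟩ a b c hs
    rcases sub3_ins.1 hs with (⟨a',b',c',h,rfl,rfl,rfl⟩ | ⟨rfl,b',c',h,rfl,rfl⟩)
    · simpa only [sh_lt, key] using h1 _ _ _ h
    · have := h2 _ _ h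
      simp only [sh_lt, sh_lt_self, lt_sh_self, key]
      omega

theorem Al_gt {v w : ℕ} {L : List ℕ} (hw : v ≤ w) : Al (ins v L) (w+1) ↔
    Al L w ∧ ∀ b c, [b,c].Sublist L → v ≤ c → c < b → w ≤ b := by
  have key : ∀ x, (sh v x < w+1 ↔ x < w) ∧ (w+1 ≤ sh v x ↔ w ≤ x) := by
    intro x; unfold sh; split_ifs <;> omega
  constructor
  · intro h
    constructor
    · intro a b c hs
      have := h _ _ _ (sub3_ins.2 (Or.inl ⟨a,b,c,hs,rfl,rfl,rfl⟩))
      simpa only [sh_lt, key] using this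
    · intro b c hs
      have := h _ _ _ (sub3_ins.2 (Or.inr ⟨rfl,b,c,hs,rfl,rfl⟩))
      simp only [sh_lt, sh_lt_self, lt_sh_self, key] at this
      omega
  · rintro ⟨h1, h2⟩ a b c hs
    rcases sub3_ins.1 hs with (⟨a',b',c',h,rfl,rfl,rfl⟩ | ⟨rfl,b',c',h,rfl,rfl⟩)
    · simpa only [sh_lt, key] using h1 _ _ _ h
    · have := h2 _ _ h
      simp only [sh_lt, sh_lt_self, lt_sh_self, key]
      omega

/-- words -/
def IsW (m : ℕ) (L : List ℕ) : Prop := L.length = m ∧ ∀ x, x ∈ L ↔ x < m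

theorem IsW_ins {m v : ℕ} {L : List ℕ} (h : IsW m L) (hv : v ≤ m) : IsW (m+1) (ins v L) := by
  refine ⟨by simp [ins, h.1], fun x => ?_⟩
  simp only [ins, List.mem_cons, List.mem_map, h.2]
  constructor
  · rintro (rfl | ⟨a, ha, rfl⟩)
    · omega
    · unfold sh; split_ifs <;> omega
  · intro hx
    rcases lt_trichotomy x v with h1 | h1 | h1
    · right; exact ⟨x, by omega, by simp [sh, h1]⟩
    · left; exact h1
    · right; exact ⟨x-1, by omega, by unfold sh; split_ifs <;> omega⟩

structure S15 (m s : ℕ) (L : List ℕ) : Prop where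
  w : IsW m L
  sm : s ≤ m
  al : ∀ w, w ≤ m → (Al L w ↔ w = s)
  inv : ∃ b c, [b,c].Sublist L ∧ s ≤ c ∧ c < b

structure S14a (m s : ℕ) (L : List ℕ) : Prop where
  w : IsW m L
  sm : s + 1 ≤ m
  al : ∀ w, w ≤ m → (Al L w ↔ w = s ∨ w = s + 1)
  inv : ∃ b c, [b,c].Sublist L ∧ s + 1 ≤ c ∧ c < b

structure S14b (m s t : ℕ) (L : List ℕ) : Prop where
  w : IsW m L
  st : s < t
  tm : t ≤ m
  al : ∀ w, w ≤ m → (Al L w ↔ w = s ∨ w = t)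
  inv : ∃ b c, [b,c].Sublist L ∧ s ≤ c ∧ c < b ∧ b < t
  ninv : ∀ b c, [b,c].Sublist L → t ≤ c → ¬ c < b
  nasc : ∀ b c, [b,c].Sublist L → b < c → ¬ c < s
  asc : ∃ b c, [b,c].Sublist L ∧ b < c ∧ c < t

structure S7 (m s : ℕ) (L : List ℕ) : Prop where
  w : IsW m L
  sm : s + 1 ≤ m
  al : ∀ w, w ≤ m → (Al L w ↔ w = s ∨ w = s + 1)
  inv : [s+1, s].Sublist L
  ninv : ∀ b c, [b,c].Sublist L → s + 1 ≤ c → ¬ c < b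
  nasc : ∀ b c, [b,c].Sublist L → b < c → ¬ c < s
  asc : ∃ b, [b,s].Sublist L ∧ b < s

structure SQ (m j k : ℕ) (L : List ℕ) : Prop where
  w : IsW m L
  jk : j + 2 + k ≤ m
  j1 : 1 ≤ j
  al : ∀ w, w ≤ m → (Al L w ↔ w ≤ j ∨ m - k ≤ w)
  dec : ∀ b c, [b,c].Sublist L → b < c → ¬ c < j
  decs : ∀ c, c + 1 < j → [c+1,c].Sublist L
  asc : [j-1,j].Sublist L
  ninv : ∀ b c, [b,c].Sublist L → m - k ≤ c → ¬ c < b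
  inv : [m-k-1,j].Sublist L

structure SP (m j k : ℕ) (L : List ℕ) : Prop where
  w : IsW m L
  jk : j + k = m
  j1 : 1 ≤ j
  al : ∀ w, w ≤ m → Al L w
  dec : ∀ b c, [b,c].Sublist L → b < c → ¬ c < j
  decs : ∀ c, c + 1 < j → [c+1,c].Sublist L
  ascs : 1 ≤ k → [j-1,j].Sublist L
  inc : ∀ b c, [b,c].Sublist L → j - 1 ≤ c → ¬ c < b

theorem pair_ins {v b c : ℕ} {L : List ℕ} (h : [b,c].Sublist L) : [sh v b, sh v c].Sublist (ins v L) :=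
  sub2_ins.2 (Or.inl ⟨_, _, h, rfl, rfl⟩)

theorem head_ins {m v c : ℕ} {L : List ℕ} (h : IsW m L) (hc : c < m) : [v, sh v c].Sublist (ins v L) :=
  sub2_ins.2 (Or.inr ⟨rfl, _, (h.2 c).2 hc, rfl⟩)

theorem sh_ge {v x : ℕ} (h : v ≤ x) : sh v x = x + 1 := by unfold sh; split_ifs <;> omega
theorem sh_lo {v x : ℕ} (h : x < v) : sh v x = x := by unfold sh; split_ifs; omega

/-- membership in sites after insertion, when an inversion lies above `v`. -/
theorem al_inv {v : ℕ} {L : List ℕ} (hi : ∃ b c, [b,c].Sublist L ∧ v ≤ c ∧ c < b) (w : ℕ) :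
    Al (ins v L) w ↔ v < w ∧ Al L (w-1) ∧ ∀ b c, [b,c].Sublist L → v ≤ c → c < b → w - 1 ≤ b := by
  rcases le_or_gt w v with h | h
  · rw [Al_le h]
    obtain ⟨b, c, h1, h2, h3⟩ := hi
    constructor
    · intro hh; exact absurd ⟨h2,h3⟩ (hh.2 b c h1).1
    · intro hh; omega
  · obtain ⟨w, rfl⟩ : ∃ u, w = u + 1 := ⟨w-1, by omega⟩
    rw [Al_gt (by omega)]; simp [h]

/-- sites after insertion, when no inversion lies above `v`. -/
theorem al_ninv {v : ℕ} {L : List ℕ} (hi : ∀ b c, [b,c].Sublist L → v ≤ c → ¬ c < b) (w : ℕ) :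
    Al (ins v L) w ↔ (v < w ∧ Al L (w-1)) ∨ (w ≤ v ∧ Al L w ∧
      ∀ b c, [b,c].Sublist L → ¬ (b < c ∧ c < v ∧ c < w)) := by
  rcases le_or_gt w v with h | h
  · rw [Al_le h]
    constructor
    · intro hh; exact Or.inr ⟨h, hh.1, fun b c hs => (hh.2 b c hs).2⟩
    · rintro (hh | hh)
      · omega
      · exact ⟨hh.2.1, fun b c hs => ⟨fun h3 => hi b c hs h3.1 h3.2, hh.2.2 b c hs⟩⟩
  · obtain ⟨w, rfl⟩ : ∃ u, w = u + 1 := ⟨w-1, by omega⟩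
    rw [Al_gt (by omega)]
    constructor
    · intro hh; left; exact ⟨h, hh.1⟩
    · rintro (hh | hh)
      · exact ⟨hh.2, fun b c hs h3 h4 => absurd h4 (hi b c hs h3)⟩
      · omega

theorem S15.ins {m s : ℕ} {L : List ℕ} (h : S15 m s L) : S15 (m+1) (s+1) (ins s L) where
  w := IsW_ins h.w h.sm
  sm := by have := h.sm; omega
  al := by
    intro w hw
    rw [al_inv h.inv]
    constructor
    · rintro ⟨h1, h2, h3⟩
      rw [h.al _ (by omega)] at h2; omega
    · rintro rfl
      exact ⟨by omega, (h.al _ h.sm).2 rfl, fun b c _ _ _ => by omega⟩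
  inv := by
    obtain ⟨b, c, h1, h2, h3⟩ := h.inv
    exact ⟨_, _, pair_ins h1, by rw [sh_ge h2]; omega, sh_lt.2 h3⟩

theorem S14a.ins0 {m s : ℕ} {L : List ℕ} (h : S14a m s L) : S14a (m+1) (s+1) (ins s L) where
  w := IsW_ins h.w (by have := h.sm; omega)
  sm := by have := h.sm; omega
  al := by
    intro w hw
    obtain ⟨b, c, h1, h2, h3⟩ := h.inv
    have := h.sm
    rw [al_inv ⟨b, c, h1, by omega, h3⟩]
    constructor
    · rintro ⟨h1, h2, h3⟩
      rw [h.al _ (by omega)] at h2; omega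
    · intro hw
      exact ⟨by omega, (h.al _ (by omega)).2 (by omega), fun b c _ _ _ => by omega⟩
  inv := by
    obtain ⟨b, c, h1, h2, h3⟩ := h.inv
    exact ⟨_, _, pair_ins h1, by rw [sh_ge (by omega)]; omega, sh_lt.2 h3⟩

theorem S14a.ins1 {m s : ℕ} {L : List ℕ} (h : S14a m s L) : S15 (m+1) (s+2) (ins (s+1) L) where
  w := IsW_ins h.w (by have := h.sm; omega)
  sm := by have := h.sm; omega
  al := by
    intro w hw
    have := h.sm
    rw [al_inv h.inv]
    constructor
    · rintro ⟨h1, h2, h3⟩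
      rw [h.al _ (by omega)] at h2; omega
    · intro hw
      exact ⟨by omega, (h.al _ (by omega)).2 (by omega), fun b c _ _ _ => by omega⟩
  inv := by
    obtain ⟨b, c, h1, h2, h3⟩ := h.inv
    exact ⟨_, _, pair_ins h1, by rw [sh_ge (by omega)]; omega, sh_lt.2 h3⟩

theorem S14b.ins0 {m s t : ℕ} {L : List ℕ} (h : S14b m s t L) : S15 (m+1) (s+1) (ins s L) where
  w := IsW_ins h.w (by have := h.st; have := h.tm; omega)
  sm := by have := h.st; have := h.tm; omega
  al := by
    intro w hw
    have := h.st
    have := h.tm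
    obtain ⟨b, c, h1, h2, h3, h4⟩ := h.inv
    rw [al_inv ⟨b, c, h1, h2, h3⟩]
    constructor
    · rintro ⟨g1, g2, g3⟩
      rw [h.al _ (by omega)] at g2
      have := g3 b c h1 h2 h3
      omega
    · intro hw
      exact ⟨by omega, (h.al _ (by omega)).2 (by omega), fun b c _ _ _ => by omega⟩
  inv := by
    obtain ⟨b, c, h1, h2, h3, h4⟩ := h.inv
    exact ⟨_, _, pair_ins h1, by rw [sh_ge (by omega)]; omega, sh_lt.2 h3⟩

theorem S14b.ins1 {m s t : ℕ} {L : List ℕ} (h : S14b m s t L) : S14b (m+1) s (t+1) (ins t L) where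
  w := IsW_ins h.w h.tm
  st := by have := h.st; omega
  tm := by have := h.tm; omega
  al := by
    intro w hw
    have := h.st
    have := h.tm
    rw [al_ninv h.ninv]
    constructor
    · rintro (⟨g1, g2⟩ | ⟨g1, g2, g3⟩)
      · rw [h.al _ (by omega)] at g2
        omega
      · rw [h.al _ (by omega)] at g2
        obtain ⟨b, c, h1, h2, h3⟩ := h.asc
        have := g3 b c h1
        omega
    · rintro (rfl | rfl)
      · right
        refine ⟨by omega, (h.al _ (by omega)).2 (by omega), fun b c h1 h2 => ?_⟩
        exact h.nasc b c h1 h2.1 h2.2.2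
      · left
        exact ⟨by omega, (h.al _ (by omega)).2 (by omega)⟩
  inv := by
    obtain ⟨b, c, h1, h2, h3, h4⟩ := h.inv
    refine ⟨_, _, pair_ins h1, ?_, sh_lt.2 h3, ?_⟩
    · rw [sh_lo (by omega)]; omega
    · rw [sh_lo (by omega)]; omega
  ninv := by
    intro b c hs hc
    rcases sub2_ins.1 hs with (⟨b', c', h1, rfl, rfl⟩ | ⟨rfl, c', h1, rfl⟩)
    · have := h.ninv b' c' h1
      unfold sh at *; split_ifs at * <;> omega
    · omega
  nasc := by
    intro b c hs hc
    have := h.st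
    rcases sub2_ins.1 hs with (⟨b', c', h1, rfl, rfl⟩ | ⟨rfl, c', h1, rfl⟩)
    · have := h.nasc b' c' h1
      unfold sh at *; split_ifs at * <;> omega
    · omega
  asc := by
    obtain ⟨b, c, h1, h2, h3⟩ := h.asc
    refine ⟨_, _, pair_ins h1, sh_lt.2 h2, ?_⟩
    rw [sh_lo (by omega)]; omega

theorem S7.ins0 {m s : ℕ} {L : List ℕ} (h : S7 m s L) : S7 (m+1) (s+1) (ins s L) where
  w := IsW_ins h.w (by have := h.sm; omega)
  sm := by have := h.sm; omega
  al := by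
    intro w hw
    have := h.sm
    rw [al_inv ⟨_, _, h.inv, le_refl _, by omega⟩]
    constructor
    · rintro ⟨h1, h2, h3⟩
      rw [h.al _ (by omega)] at h2; omega
    · intro hw
      exact ⟨by omega, (h.al _ (by omega)).2 (by omega), fun b c _ _ _ => by omega⟩
  inv := by
    have := pair_ins (v := s) h.inv
    rwa [sh_ge (by omega), sh_ge (by omega)] at this
  ninv := by
    intro b c hs hc
    rcases sub2_ins.1 hs with (⟨b', c', h1, rfl, rfl⟩ | ⟨rfl, c', h1, rfl⟩)
    · have := h.ninv b' c' h1
      unfold sh at *; split_ifs at * <;> omega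
    · omega
  nasc := by
    intro b c hs hc
    rcases sub2_ins.1 hs with (⟨b', c', h1, rfl, rfl⟩ | ⟨rfl, c', h1, rfl⟩)
    · have := h.nasc b' c' h1
      unfold sh at *; split_ifs at * <;> omega
    · omega
  asc := by
    have := head_ins (v := s) (c := s) h.w (by have := h.sm; omega)
    rw [sh_ge (le_refl _)] at this
    exact ⟨s, this, by omega⟩

theorem S7.ins1 {m s : ℕ} {L : List ℕ} (h : S7 m s L) : S14b (m+1) s (s+2) (ins (s+1) L) where
  w := IsW_ins h.w h.sm
  st := by omega
  tm := by have := h.sm; omega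
  al := by
    intro w hw
    have := h.sm
    rw [al_ninv h.ninv]
    constructor
    · rintro (⟨g1, g2⟩ | ⟨g1, g2, g3⟩)
      · rw [h.al _ (by omega)] at g2
        omega
      · rw [h.al _ (by omega)] at g2
        obtain ⟨b, h1, h2⟩ := h.asc
        have := g3 b s h1
        omega
    · rintro (rfl | rfl)
      · right
        refine ⟨by omega, (h.al _ (by omega)).2 (by omega), fun b c h1 h2 => ?_⟩
        exact h.nasc b c h1 h2.1 h2.2.2
      · left
        exact ⟨by omega, (h.al _ (by omega)).2 (by omega)⟩
  inv := by
    have := head_ins (v := s+1) (c := s) h.w (by have := h.sm; omega)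
    rw [sh_lo (by omega)] at this
    exact ⟨_, _, this, by omega, by omega, by omega⟩
  ninv := by
    intro b c hs hc
    rcases sub2_ins.1 hs with (⟨b', c', h1, rfl, rfl⟩ | ⟨rfl, c', h1, rfl⟩)
    · have := h.ninv b' c' h1
      unfold sh at *; split_ifs at * <;> omega
    · omega
  nasc := by
    intro b c hs hc
    rcases sub2_ins.1 hs with (⟨b', c', h1, rfl, rfl⟩ | ⟨rfl, c', h1, rfl⟩)
    · have := h.nasc b' c' h1
      unfold sh at *; split_ifs at * <;> omega
    · omega
  asc := by
    obtain ⟨b, h1, h2⟩ := h.asc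
    refine ⟨_, _, pair_ins h1, sh_lt.2 h2, ?_⟩
    rw [sh_lo (by omega)]; omega

theorem SQ.ins_lo {m j k v : ℕ} {L : List ℕ} (h : SQ m j k L) (hv : v < j) :
    S14a (m+1) (v+1) (ins v L) where
  w := IsW_ins h.w (by have := h.jk; omega)
  sm := by have := h.jk; omega
  al := by
    intro w hw
    have := h.jk
    rw [al_inv ⟨_, _, h.inv, by omega, by omega⟩]
    constructor
    · rintro ⟨h1, h2, h3⟩
      rw [h.al _ (by omega)] at h2
      by_cases hj : v + 1 < j
      · have := h3 _ _ (h.decs v hj) (by omega) (by omega)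
        omega
      · have := h3 _ _ h.inv (by omega) (by omega)
        omega
    · intro hw
      exact ⟨by omega, (h.al _ (by omega)).2 (by omega), fun b c _ _ _ => by omega⟩
  inv := by
    have := h.jk
    refine ⟨_, _, pair_ins h.inv, ?_, sh_lt.2 (by omega)⟩
    rw [sh_ge (by omega)]; omega

theorem SQ.ins_mid {m j k : ℕ} {L : List ℕ} (h : SQ m j k L) :
    S15 (m+1) (j+1) (ins j L) where
  w := IsW_ins h.w (by have := h.jk; omega)
  sm := by have := h.jk; omega
  al := by
    intro w hw
    have := h.jk
    rw [al_inv ⟨_, _, h.inv, by omega, by omega⟩]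
    constructor
    · rintro ⟨h1, h2, h3⟩
      rw [h.al _ (by omega)] at h2
      have := h3 _ _ h.inv (by omega) (by omega)
      omega
    · intro hw
      exact ⟨by omega, (h.al _ (by omega)).2 (by omega), fun b c _ _ _ => by omega⟩
  inv := by
    have := h.jk
    refine ⟨_, _, pair_ins h.inv, ?_, sh_lt.2 (by omega)⟩
    rw [sh_ge (by omega)]

theorem SQ.ins_hi {m j k i : ℕ} {L : List ℕ} (h : SQ m j k L) (hi : i ≤ k) :
    SQ (m+1) j i (ins (m-i) L) where
  w := IsW_ins h.w (by omega)
  jk := by have := h.jk; omega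
  j1 := h.j1
  al := by
    intro w hw
    have := h.jk
    have := h.j1
    rw [al_ninv (fun b c hs hc => h.ninv b c hs (by omega))]
    constructor
    · rintro (⟨g1, g2⟩ | ⟨g1, g2, g3⟩)
      · omega
      · rw [h.al _ (by omega)] at g2
        have := g3 _ _ h.asc
        omega
    · intro g
      rcases le_or_gt w j with g1 | g1
      · right
        refine ⟨by omega, (h.al _ (by omega)).2 (by omega), fun b c h1 h2 => ?_⟩
        exact h.dec b c h1 h2.1 (by omega)
      · left
        exact ⟨by omega, (h.al _ (by omega)).2 (by omega)⟩
  dec := by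
    intro b c hs hc
    have := h.jk
    rcases sub2_ins.1 hs with (⟨b', c', h1, rfl, rfl⟩ | ⟨rfl, c', h1, rfl⟩)
    · have := h.dec b' c' h1
      unfold sh at *; split_ifs at * <;> omega
    · omega
  decs := by
    intro c hc
    have := h.jk
    have := pair_ins (v := m - i) (h.decs c hc)
    rwa [sh_lo (by omega), sh_lo (by omega)] at this
  asc := by
    have := h.jk
    have := pair_ins (v := m - i) h.asc
    rwa [sh_lo (by omega), sh_lo (by omega)] at this
  ninv := by
    intro b c hs hc
    rcases sub2_ins.1 hs with (⟨b', c', h1, rfl, rfl⟩ | ⟨rfl, c', h1, rfl⟩)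
    · have := h.ninv b' c' h1
      unfold sh at *; split_ifs at * <;> omega
    · omega
  inv := by
    have := h.jk
    have := head_ins (v := m-i) (c := j) h.w (by omega)
    rw [sh_lo (by omega)] at this
    rwa [show m + 1 - i - 1 = m - i by omega]

theorem SP.ins_lo {m j k v : ℕ} {L : List ℕ} (h : SP m j k L) (hv : v + 2 < j) :
    S14a (m+1) (v+1) (ins v L) where
  w := IsW_ins h.w (by have := h.jk; omega)
  sm := by have := h.jk; omega
  al := by
    intro w hw
    have := h.jk
    rw [al_inv ⟨_, _, h.decs v (by omega), by omega, by omega⟩]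
    constructor
    · rintro ⟨h1, h2, h3⟩
      have := h3 _ _ (h.decs v (by omega)) (by omega) (by omega)
      omega
    · intro hw
      exact ⟨by omega, h.al _ (by omega), fun b c _ _ _ => by omega⟩
  inv := by
    have := h.jk
    refine ⟨_, _, pair_ins (h.decs (v+1) (by omega)), ?_, sh_lt.2 (by omega)⟩
    rw [sh_ge (by omega)]

theorem SP.ins_7 {m j k v : ℕ} {L : List ℕ} (h : SP m j k L) (hv : v + 2 = j) :
    S7 (m+1) (v+1) (ins v L) where
  w := IsW_ins h.w (by have := h.jk; omega)
  sm := by have := h.jk; omega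
  al := by
    intro w hw
    have := h.jk
    rw [al_inv ⟨_, _, h.decs v (by omega), by omega, by omega⟩]
    constructor
    · rintro ⟨h1, h2, h3⟩
      have := h3 _ _ (h.decs v (by omega)) (by omega) (by omega)
      omega
    · intro hw
      exact ⟨by omega, h.al _ (by omega), fun b c _ _ _ => by omega⟩
  inv := by
    have := pair_ins (v := v) (h.decs v (by omega))
    rwa [sh_ge (by omega), sh_ge (by omega)] at this
  ninv := by
    intro b c hs hc
    rcases sub2_ins.1 hs with (⟨b', c', h1, rfl, rfl⟩ | ⟨rfl, c', h1, rfl⟩)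
    · have := h.inc b' c' h1
      unfold sh at *; split_ifs at * <;> omega
    · omega
  nasc := by
    intro b c hs hc
    rcases sub2_ins.1 hs with (⟨b', c', h1, rfl, rfl⟩ | ⟨rfl, c', h1, rfl⟩)
    · have := h.dec b' c' h1
      unfold sh at *; split_ifs at * <;> omega
    · omega
  asc := by
    have := h.jk
    have := head_ins (v := v) (c := v) h.w (by omega)
    rw [sh_ge (le_refl _)] at this
    exact ⟨v, this, by omega⟩

theorem SP.ins_k {m j k : ℕ} {L : List ℕ} (h : SP m j k L) :
    SP (m+1) j (k+1) (ins (j-1) L) where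
  w := IsW_ins h.w (by have := h.jk; omega)
  jk := by have := h.jk; omega
  j1 := h.j1
  al := by
    intro w hw
    have := h.jk
    have := h.j1
    rw [al_ninv h.inc]
    rcases le_or_gt w (j-1) with g | g
    · right
      exact ⟨g, h.al _ (by omega), fun b c hs h2 => h.dec b c hs h2.1 (by omega)⟩
    · left; exact ⟨g, h.al _ (by omega)⟩
  dec := by
    intro b c hs hc
    have := h.jk
    rcases sub2_ins.1 hs with (⟨b', c', h1, rfl, rfl⟩ | ⟨rfl, c', h1, rfl⟩)
    · have := h.dec b' c' h1
      unfold sh at *; split_ifs at * <;> omega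
    · omega
  decs := by
    intro c hc
    have := h.jk
    by_cases hc' : c + 2 = j
    · have := head_ins (v := j-1) (c := c) h.w (by omega)
      rw [sh_lo (by omega)] at this
      rwa [show j - 1 = c + 1 by omega] at *
    · have := pair_ins (v := j-1) (h.decs c hc)
      rwa [sh_lo (by omega), sh_lo (by omega)] at this
  ascs := by
    intro _
    have := h.jk
    have := h.j1
    have := head_ins (v := j-1) (c := j-1) h.w (by omega)
    rw [sh_ge (by omega)] at this
    rwa [show j - 1 + 1 = j by omega] at this
  inc := by
    intro b c hs hc
    rcases sub2_ins.1 hs with (⟨b', c', h1, rfl, rfl⟩ | ⟨rfl, c', h1, rfl⟩)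
    · have := h.inc b' c' h1
      unfold sh at *; split_ifs at * <;> omega
    · omega

theorem SP.ins_j {m j k : ℕ} {L : List ℕ} (h : SP m j k L) :
    SP (m+1) (j+1) k (ins j L) where
  w := IsW_ins h.w (by have := h.jk; omega)
  jk := by have := h.jk; omega
  j1 := by omega
  al := by
    intro w hw
    have := h.jk
    have := h.j1
    rw [al_ninv (fun b c hs hc => h.inc b c hs (by omega))]
    rcases le_or_gt w j with g | g
    · right
      exact ⟨g, h.al _ (by omega), fun b c hs h2 => h.dec b c hs h2.1 (by omega)⟩
    · left; exact ⟨g, h.al _ (by omega)⟩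
  dec := by
    intro b c hs hc
    have := h.jk
    rcases sub2_ins.1 hs with (⟨b', c', h1, rfl, rfl⟩ | ⟨rfl, c', h1, rfl⟩)
    · have := h.dec b' c' h1
      unfold sh at *; split_ifs at * <;> omega
    · omega
  decs := by
    intro c hc
    have := h.jk
    by_cases hc' : c + 1 = j
    · have := head_ins (v := j) (c := c) h.w (by omega)
      rw [sh_lo (by omega)] at this
      rwa [hc']
    · have := pair_ins (v := j) (h.decs c (by omega))
      rwa [sh_lo (by omega), sh_lo (by omega)] at this
  ascs := by
    intro _
    have := h.jk
    have := head_ins (v := j) (c := j) h.w (by omega)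
    rw [sh_ge (by omega)] at this
    exact this
  inc := by
    intro b c hs hc
    have := h.j1
    rcases sub2_ins.1 hs with (⟨b', c', h1, rfl, rfl⟩ | ⟨rfl, c', h1, rfl⟩)
    · have := h.inc b' c' h1
      unfold sh at *; split_ifs at * <;> omega
    · omega

theorem SP.ins_hi {m j k i : ℕ} {L : List ℕ} (h : SP m j k L) (hi : i < k) :
    SQ (m+1) j i (ins (m-i) L) where
  w := IsW_ins h.w (by omega)
  jk := by have := h.jk; omega
  j1 := h.j1
  al := by
    intro w hw
    have := h.jk
    have := h.j1
    rw [al_ninv (fun b c hs hc => h.inc b c hs (by omega))]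
    constructor
    · rintro (⟨g1, g2⟩ | ⟨g1, g2, g3⟩)
      · omega
      · have := g3 _ _ (h.ascs (by omega))
        omega
    · intro g
      rcases le_or_gt w j with g1 | g1
      · right
        refine ⟨by omega, h.al _ (by omega), fun b c h1 h2 => ?_⟩
        exact h.dec b c h1 h2.1 (by omega)
      · left
        exact ⟨by omega, h.al _ (by omega)⟩
  dec := by
    intro b c hs hc
    have := h.jk
    rcases sub2_ins.1 hs with (⟨b', c', h1, rfl, rfl⟩ | ⟨rfl, c', h1, rfl⟩)
    · have := h.dec b' c' h1
      unfold sh at *; split_ifs at * <;> omega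
    · omega
  decs := by
    intro c hc
    have := h.jk
    have := pair_ins (v := m - i) (h.decs c hc)
    rwa [sh_lo (by omega), sh_lo (by omega)] at this
  asc := by
    have := h.jk
    have := pair_ins (v := m - i) (h.ascs (by omega))
    rwa [sh_lo (by omega), sh_lo (by omega)] at this
  ninv := by
    intro b c hs hc
    rcases sub2_ins.1 hs with (⟨b', c', h1, rfl, rfl⟩ | ⟨rfl, c', h1, rfl⟩)
    · have := h.inc b' c' h1
      have := h.jk
      unfold sh at *; split_ifs at * <;> omega
    · omega
  inv := by
    have := h.jk
    have := head_ins (v := m-i) (c := j) h.w (by omega)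
    rw [sh_lo (by omega)] at this
    rwa [show m + 1 - i - 1 = m - i by omega]

theorem SP_one : SP 1 1 0 [0] where
  w := ⟨rfl, by simp⟩
  jk := rfl
  j1 := le_refl _
  al := by intro w _ a b c h; have := h.length_le; simp at this
  dec := by intro b c h; have := h.length_le; simp at this
  decs := by intro c h; omega
  ascs := by omega
  inc := by intro b c h; have := h.length_le; simp at this

open Classical in
noncomputable def NN : ℕ → List ℕ → ℕ
  | 0, _ => 1
  | n+1, L => ∑ v ∈ Finset.range (L.length + 1), if Al L v then NN n (ins v L) else 0

theorem NN_two {n m s t : ℕ} {L : List ℕ} (hw : IsW m L) (hst : s < t) (ht : t ≤ m)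
    (h : ∀ w, w ≤ m → (Al L w ↔ w = s ∨ w = t)) :
    NN (n+1) L = NN n (ins s L) + NN n (ins t L) := by
  classical
  rw [NN, hw.1, ← Finset.sum_filter]
  have : (Finset.range (m+1)).filter (fun v => Al L v) = {s, t} := by
    ext w
    simp only [Finset.mem_filter, Finset.mem_range, Finset.mem_insert, Finset.mem_singleton]
    constructor
    · rintro ⟨h1, h2⟩; exact (h w (by omega)).1 h2
    · intro h1; exact ⟨by omega, (h w (by omega)).2 h1⟩
  rw [this, Finset.sum_pair (by omega)]

theorem NN_one {n m s : ℕ} {L : List ℕ} (hw : IsW m L) (ht : s ≤ m)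
    (h : ∀ w, w ≤ m → (Al L w ↔ w = s)) :
    NN (n+1) L = NN n (ins s L) := by
  classical
  rw [NN, hw.1, ← Finset.sum_filter]
  have : (Finset.range (m+1)).filter (fun v => Al L v) = {s} := by
    ext w
    simp only [Finset.mem_filter, Finset.mem_range, Finset.mem_singleton]
    constructor
    · rintro ⟨h1, h2⟩; exact (h w (by omega)).1 h2
    · intro h1; exact ⟨by omega, (h w (by omega)).2 h1⟩
  rw [this, Finset.sum_singleton]

theorem c_zero {G A : PowerSeries ℚ} (h : G = 1 + X * A) : coeff 0 G = 1 := by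
  rw [h]; simp

theorem c_succ {G A : PowerSeries ℚ} (h : G = 1 + X * A) (n : ℕ) : coeff (n+1) G = coeff n A := by
  rw [h]; simp [coeff_succ_X_mul, PowerSeries.coeff_one]

section
variable {r s t : PowerSeries ℚ}

theorem count15 (hr : r * (1 - X) = 1) : ∀ n m u L, S15 m u L → (NN n L : ℚ) = coeff n r := by
  have e : r = 1 + X * r := by linear_combination hr
  intro n
  induction n with
  | zero => intro m u L h; rw [c_zero e]; simp [NN]
  | succ n ih =>
    intro m u L h
    rw [c_succ e, NN_one h.w h.sm h.al, ih _ _ _ h.ins]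

theorem count14a (hr : r * (1 - X) = 1) : ∀ n m u L, S14a m u L → (NN n L : ℚ) = coeff n (r^2) := by
  have e : r^2 = 1 + X * (r^2 + r) := by linear_combination (1 + r) * hr
  intro n
  induction n with
  | zero => intro m u L h; rw [c_zero e]; simp [NN]
  | succ n ih =>
    intro m u L h
    rw [c_succ e, NN_two h.w (by omega) h.sm h.al, map_add, Nat.cast_add, ih _ _ _ h.ins0,
      count15 hr _ _ _ _ h.ins1]

theorem count14b (hr : r * (1 - X) = 1) : ∀ n m u v L, S14b m u v L →
    (NN n L : ℚ) = coeff n (r^2) := by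
  have e : r^2 = 1 + X * (r + r^2) := by linear_combination (1 + r) * hr
  intro n
  induction n with
  | zero => intro m u v L h; rw [c_zero e]; simp [NN]
  | succ n ih =>
    intro m u v L h
    rw [c_succ e, NN_two h.w h.st h.tm h.al, map_add, Nat.cast_add, ih _ _ _ _ h.ins1,
      count15 hr _ _ _ _ h.ins0]

theorem count7 (hr : r * (1 - X) = 1) : ∀ n m u L, S7 m u L →
    (NN n L : ℚ) = coeff n (r + X * r^3) := by
  have e : r + X * r^3 = 1 + X * ((r + X * r^3) + r^2) := by linear_combination (1 + X * r^2) * hr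
  intro n
  induction n with
  | zero => intro m u L h; rw [c_zero e]; simp [NN]
  | succ n ih =>
    intro m u L h
    rw [c_succ e, NN_two h.w (by omega) h.sm h.al, map_add, Nat.cast_add, ih _ _ _ h.ins0,
      count14b hr _ _ _ _ _ h.ins1]

theorem geo (hr : r * (1 - X) = 1) (k : ℕ) :
    X * ∑ i ∈ Finset.range k, r^(i+1) = r^k - 1 := by
  induction k with
  | zero => simp
  | succ k ih =>
    rw [Finset.sum_range_succ, mul_add, ih]
    linear_combination - r^k * hr

open Classical in
theorem countQ (hr : r * (1 - X) = 1) : ∀ n m j k L, SQ m j k L →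
    (NN n L : ℚ) = coeff n ((1 + X * r + (j : PowerSeries ℚ) * X * r^2) * r^(k+1)) := by
  have e : ∀ j k : ℕ, (1 + X * r + (j : PowerSeries ℚ) * X * r^2) * r^(k+1) = 1 + X * ((∑ i ∈ Finset.range j, r^2) + r
      + ∑ i ∈ Finset.range (k+1), (1 + X * r + (j : PowerSeries ℚ) * X * r^2) * r^(i+1)) := by
    intro j k
    rw [← Finset.mul_sum, Finset.sum_const, Finset.card_range, nsmul_eq_mul]
    have := geo hr (k+1)
    linear_combination - (1 + X * r + (j : PowerSeries ℚ) * X * r^2) * this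
  intro n
  induction n with
  | zero => intro m j k L h; rw [c_zero (e j k)]; simp [NN]
  | succ n ih =>
    intro m j k L h
    have h1 := h.jk
    obtain ⟨d, hd⟩ : ∃ d, m + 1 = j + (1 + (d + (k+1))) := ⟨m - j - k - 1, by omega⟩
    rw [c_succ (e j k), NN, h.w.1, hd, Finset.sum_range_add, Finset.sum_range_add,
      Finset.sum_range_add, Finset.sum_range_one, map_add, map_add, map_sum, map_sum,
      ← Finset.sum_range_reflect (fun i => coeff n ((1 + X * r + (j : PowerSeries ℚ) * X * r^2) * r^(i+1)))]
    push_cast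
    have p1 : ∀ v ∈ Finset.range j, (if Al L v then (NN n (ins v L) : ℚ) else 0) = coeff n (r^2) := by
      intro v hv
      rw [Finset.mem_range] at hv
      rw [if_pos ((h.al v (by omega)).2 (by omega)), count14a hr _ _ _ _ (h.ins_lo hv)]
    have p3 : ∀ v ∈ Finset.range d, (if Al L (j+(1+v)) then (NN n (ins (j+(1+v)) L) : ℚ) else 0) = 0 := by
      intro v hv
      rw [Finset.mem_range] at hv
      rw [if_neg]
      rw [h.al _ (by omega)]
      omega
    have p4 : ∀ i ∈ Finset.range (k+1), (if Al L (j+(1+(d+i))) then (NN n (ins (j+(1+(d+i))) L) : ℚ) else 0)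
        = coeff n ((1 + X * r + (j : PowerSeries ℚ) * X * r^2) * r^(k+1-1-i+1)) := by
      intro v hv
      rw [Finset.mem_range] at hv
      rw [if_pos ((h.al _ (by omega)).2 (by omega))]
      have := h.ins_hi (i := k - v) (by omega)
      rw [show m - (k - v) = j+(1+(d+v)) by omega] at this
      rw [ih _ _ _ _ this]
      rfl
    rw [Finset.sum_congr rfl p1, Finset.sum_congr rfl p3, Finset.sum_congr rfl p4,
      if_pos ((h.al (j+0) (by omega)).2 (by omega)), Nat.add_zero j, count15 hr _ _ _ _ h.ins_mid]
    simp only [Finset.sum_const_zero, Nat.add_sub_cancel]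
    ring

noncomputable def GP (r s t : PowerSeries ℚ) (j k : ℕ) : PowerSeries ℚ :=
  s * X * (r + X*r^3 - 2*r^2 - r) + (t * (1 + X^2 * t) + (j : PowerSeries ℚ) * (t * X * r)) * r^k +
    if j = 1 then r * X * (r^2 - (r + X*r^3)) else 0

theorem GP_eq (hr : r * (1 - X) = 1)
    (hs : s * (1 - 2*X) = 1) (ht : t * (1 - 3*X+X^2) = 1) (J k : ℕ) :
    GP r s t (J+1) k = 1 + X * ((∑ i ∈ Finset.range (J-1), r^2) +
      (if J = 0 then 0 else r + X * r^3) + GP r s t (J+1) (k+1) + GP r s t (J+2) k +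
      ∑ i ∈ Finset.range k, (1 + X * r + ((J+1 : ℕ) : PowerSeries ℚ) * X * r^2) * r^(i+1)) := by
  have hg := geo hr k
  rw [← Finset.mul_sum, Finset.sum_const, Finset.card_range, nsmul_eq_mul]
  generalize ∑ i ∈ Finset.range k, r^(i+1) = q at *
  have hA : s * X * (r + X*r^3 - 2*r^2 - r) * (1 - 2 * X) = X * (r + X*r^3 - 2*r^2 - r) := by
    linear_combination X * (r + X*r^3 - 2*r^2 - r) * hs
  have h0 : 1 - X * r - X = r * (1 - 3*X+X^2) := by linear_combination -(1-X) * hr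
  have hd : (t * X * r) * (1 - X * r - X) = X * r^2 := by
    rw [h0]; linear_combination X * r^2 * ht
  have hc : (t * (1 + X^2 * t)) * (1 - X * r - X) = X * (t * X * r) + 1 + X * r := by
    rw [h0]; linear_combination (r * (1 + X^2 * t)) * ht + hr
  have he : (r * X * (r^2 - (r + X*r^3))) * (1 - X) = X * (r^2 - (r + X*r^3)) := by
    linear_combination X * (r^2 - (r + X*r^3)) * hr
  unfold GP
  generalize s * X * (r + X*r^3 - 2*r^2 - r) = A at *
  generalize t * X * r = d at *
  generalize t * (1 + X^2 * t) = c at *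
  generalize r * X * (r^2 - (r + X*r^3)) = e at *
  rcases J with _ | J
  · simp
    linear_combination hA + r^k * hc + r^k * hd + he - (1 + X * r + X * r^2) * hg
  · simp
    linear_combination hA + r^k * hc + (J+2) * r^k * hd - (1 + X * r + (J+2) * X * r^2) * hg

open Classical in
theorem countP (hr : r * (1 - X) = 1)
    (hs : s * (1 - 2*X) = 1) (ht : t * (1 - 3*X+X^2) = 1) : ∀ n m J k L, SP m (J+1) k L →
    (NN n L : ℚ) = coeff n (GP r s t (J+1) k) := by
  intro n
  induction n with
  | zero => intro m J k L h; rw [c_zero (GP_eq hr hs ht J k)]; simp [NN]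
  | succ n ih =>
    intro m J k L h
    have h1 := h.jk
    have hd : m + 1 = J + (1 + (1 + k)) := by omega
    rw [c_succ (GP_eq hr hs ht J k), NN, h.w.1, hd, Finset.sum_range_add, Finset.sum_range_add,
      Finset.sum_range_add, Finset.sum_range_one, Finset.sum_range_one, map_add, map_add, map_add,
      map_add, map_sum, map_sum,
      ← Finset.sum_range_reflect (fun i => coeff n ((1 + X * r + ((J+1 : ℕ) : PowerSeries ℚ) * X * r^2) * r^(i+1)))]
    have p4 : ∀ i ∈ Finset.range k, (if Al L (J+(1+(1+i))) then (NN n (ins (J+(1+(1+i))) L) : ℚ) else 0)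
        = coeff n ((1 + X * r + ((J+1 : ℕ) : PowerSeries ℚ) * X * r^2) * r^(k-1-i+1)) := by
      intro v hv
      rw [Finset.mem_range] at hv
      rw [if_pos (h.al _ (by omega))]
      have := h.ins_hi (i := k - 1 - v) (by omega)
      rw [show m - (k - 1 - v) = J+(1+(1+v)) by omega] at this
      rw [countQ hr _ _ _ _ _ this]
    have p2 := ih _ _ _ _ h.ins_k
    have p3 := ih _ _ _ _ h.ins_j
    rw [if_pos (h.al (J+0) (by omega)), if_pos (h.al (J+(1+0)) (by omega))]
    push_cast
    rw [Finset.sum_congr rfl p4]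
    simp only [Nat.add_sub_cancel] at p2
    simp only [Nat.add_zero]
    rw [p2, p3]
    have p1 : ∑ v ∈ Finset.range J, (if Al L v then (NN n (ins v L) : ℚ) else 0) =
        ∑ i ∈ Finset.range (J-1), coeff n (r^2) + coeff n (if J = 0 then 0 else r + X * r^3) := by
      rcases J with _ | J
      · simp
      · rw [Finset.sum_range_succ, if_pos (h.al _ (by omega)), count7 hr _ _ _ _ (h.ins_7 rfl)]
        simp only [Nat.add_sub_cancel]
        rw [if_neg (by omega)]
        congr 1
        refine Finset.sum_congr rfl fun v hv => ?_
        rw [Finset.mem_range] at hv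
        rw [if_pos (h.al v (by omega)), count14a hr _ _ _ _ (h.ins_lo (by omega))]
    rw [p1]
    push_cast
    ring
end

/-! Counting words -/
def words : ℕ → Finset (List ℕ)
  | 0 => {[]}
  | n+1 => (Finset.range (n+1) ×ˢ words n).image (fun p => ins p.1 p.2)

theorem sh_inj (v : ℕ) : Function.Injective (sh v) := by
  intro x y h; unfold sh at h; split_ifs at h <;> omega

theorem ins_inj : Function.Injective (fun p : ℕ × List ℕ => ins p.1 p.2) := by
  rintro ⟨v, L⟩ ⟨w, M⟩ h
  simp only [ins, List.cons.injEq] at h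
  obtain ⟨rfl, h⟩ := h
  rw [(List.map_injective_iff.2 (sh_inj v)) h]

theorem words_card (n : ℕ) : (words n).card = n.factorial := by
  induction n with
  | zero => rfl
  | succ n ih =>
    rw [words, Finset.card_image_of_injective _ ins_inj, Finset.card_product, ih, Finset.card_range,
      Nat.factorial_succ]

theorem words_len {n : ℕ} : ∀ {L}, L ∈ words n → L.length = n := by
  induction n with
  | zero => intro L h; simp [words] at h; simp [h]
  | succ n ih =>
    intro L h
    simp only [words, Finset.mem_image, Finset.mem_product] at h
    obtain ⟨p, h1, rfl⟩ := h
    simp [ins, ih h1.2]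

theorem mem_words {n : ℕ} : ∀ {L : List ℕ}, L.length = n → L.Nodup → (∀ x ∈ L, x < n) → L ∈ words n := by
  induction n with
  | zero => intro L h _ _; simp [words]; simpa using h
  | succ n ih =>
    intro L h1 h2 h3
    match L, h1 with
    | v :: L, h1 =>
      simp only [words, Finset.mem_image, Finset.mem_product]
      rw [List.nodup_cons] at h2
      have hL : (L.map (fun x => if x < v then x else x - 1)).map (sh v) = L := by
        rw [List.map_map]
        conv_rhs => rw [← List.map_id L]
        refine List.map_congr_left fun x hx => ?_
        have : x ≠ v := fun h => h2.1 (h ▸ hx)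
        simp only [Function.comp, sh, id]
        split_ifs <;> omega
      refine ⟨(v, L.map (fun x => if x < v then x else x - 1)), ⟨?_, ?_⟩, ?_⟩
      · simpa using h3 v (by simp)
      · apply ih
        · simpa using h1
        · rw [← hL] at h2; exact List.Nodup.of_map _ h2.2
        · intro y hy
          rw [List.mem_map] at hy
          obtain ⟨x, hx, rfl⟩ := hy
          have := h3 x (by simp [hx])
          have h4 := h3 v (by simp)
          have : x ≠ v := fun h => h2.1 (h ▸ hx)
          split_ifs <;> omega
      · simp only [ins, hL]

open Classical in
theorem words_step (k n : ℕ) : ∑ L ∈ (words k).filter Av, NN (n+1) L =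
    ∑ L ∈ (words (k+1)).filter Av, NN n L := by
  rw [Finset.sum_filter, Finset.sum_filter]
  rw [words, Finset.sum_image (fun _ _ _ _ h => ins_inj h), Finset.sum_product, Finset.sum_comm]
  refine Finset.sum_congr rfl fun L hL => ?_
  simp only [Av_ins]
  rw [NN, words_len hL]
  by_cases h : Av L <;> simp [h]

open Classical in
theorem words_count (n : ℕ) : ∀ k, ∑ L ∈ (words k).filter Av, NN n L = ((words (k+n)).filter Av).card := by
  induction n with
  | zero => intro k; simp [NN]
  | succ n ih => intro k; rw [words_step, ih, show k + 1 + n = k + (n+1) by omega]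

open Classical in
theorem NN_nil (n : ℕ) : NN n [] = ((words n).filter Av).card := by
  have := words_count n 0
  rw [zero_add] at this
  rw [← this]
  have h : (words 0).filter Av = {[]} := by
    simp only [words]
    rw [Finset.filter_true_of_mem]
    intro L hL
    simp at hL
    subst hL
    intro a b c d h
    simp at h
  rw [h, Finset.sum_singleton]

def wd {n : ℕ} (π : Equiv.Perm (Fin n)) : List ℕ := List.ofFn (fun i => (π.symm i : ℕ))

theorem wd_inj {n : ℕ} : Function.Injective (wd (n := n)) := by
  intro π ρ h
  have := List.ofFn_injective h
  rw [← Equiv.symm_bijective.1.eq_iff]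
  ext i
  exact congrFun this i

theorem wd_mem {n : ℕ} (π : Equiv.Perm (Fin n)) : wd π ∈ words n := by
  apply mem_words
  · simp [wd]
  · rw [wd, List.nodup_ofFn]
    exact Fin.val_injective.comp π.symm.injective
  · intro x hx
    rw [wd, List.mem_ofFn] at hx
    obtain ⟨i, rfl⟩ := hx
    exact (π.symm i).2

theorem wd_image (n : ℕ) : Finset.univ.image (wd (n := n)) = words n := by
  apply Finset.eq_of_subset_of_card_le
  · intro L hL
    simp only [Finset.mem_image] at hL
    obtain ⟨π, _, rfl⟩ := hL
    exact wd_mem π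
  · rw [Finset.card_image_of_injective _ wd_inj, words_card, Finset.card_univ, Fintype.card_perm,
      Fintype.card_fin]

theorem strictMono4 {n : ℕ} {a b c d : Fin n} (h1 : a < b) (h2 : b < c) (h3 : c < d) :
    StrictMono ![a,b,c,d] := by
  rw [Fin.strictMono_iff_lt_succ]
  intro x
  fin_cases x <;> assumption

theorem sub_wd {n : ℕ} (π : Equiv.Perm (Fin n)) (a b c d : ℕ) : [a,b,c,d].Sublist (wd π) ↔
    ∃ i j k l : Fin n, i < j ∧ j < k ∧ k < l ∧ a = π.symm i ∧ b = π.symm j ∧ c = π.symm k ∧ d = π.symm l := by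
  rw [List.sublist_iff_exists_fin_orderEmbedding_get_eq]
  have hl : (wd π).length = n := by simp [wd]
  constructor
  · rintro ⟨f, hf⟩
    refine ⟨Fin.cast hl (f ⟨0, by simp⟩), Fin.cast hl (f ⟨1, by simp⟩), Fin.cast hl (f ⟨2, by simp⟩),
      Fin.cast hl (f ⟨3, by simp⟩), ?_, ?_, ?_, ?_, ?_, ?_, ?_⟩
    · simp [Fin.lt_def]
    · simp [Fin.lt_def]
    · simp [Fin.lt_def]
    · have := hf ⟨0, by simp⟩; simp [wd] at this; exact this
    · have := hf ⟨1, by simp⟩; simp [wd] at this; exact this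
    · have := hf ⟨2, by simp⟩; simp [wd] at this; exact this
    · have := hf ⟨3, by simp⟩; simp [wd] at this; exact this
  · rintro ⟨i, j, k, l, h1, h2, h3, rfl, rfl, rfl, rfl⟩
    refine ⟨OrderEmbedding.ofStrictMono (fun x : Fin 4 => Fin.cast hl.symm (![i,j,k,l] x)) ?_, ?_⟩
    · intro x y hxy
      exact strictMono4 h1 h2 h3 hxy
    · intro x
      change Fin 4 at x
      fin_cases x <;> simp [wd] <;> rfl

theorem contains_iff {n : ℕ} (π : Equiv.Perm (Fin n)) (σ : Fin 4 → Fin 4) : ContainsPattern π σ ↔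
    ∃ p : Fin 4 → Fin n, StrictMono p ∧ ∀ a b, σ a < σ b ↔ π (p a) < π (p b) := by
  constructor
  · rintro ⟨f, hf⟩; exact ⟨f, f.strictMono, hf⟩
  · rintro ⟨p, h1, h2⟩; exact ⟨OrderEmbedding.ofStrictMono p h1, h2⟩

theorem av_iff {n : ℕ} (π : Equiv.Perm (Fin n)) :
    (∀ σ ∈ ({![0,1,3,2], ![1,3,2,0], ![2,3,0,1]} : Set (Fin 4 → Fin 4)), ¬ ContainsPattern π σ) ↔
    Av (wd π) := by
  simp only [Set.mem_insert_iff, Set.mem_singleton_iff, forall_eq_or_imp, forall_eq, contains_iff]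
  constructor
  · rintro ⟨h1, h2, h3⟩ a b c d hs
    rw [sub_wd] at hs
    obtain ⟨i, j, k, l, g1, g2, g3, rfl, rfl, rfl, rfl⟩ := hs
    simp only [Fin.val_fin_lt]
    refine ⟨?_, ?_, ?_⟩
    · rintro ⟨e1, e2, e3⟩
      refine h1 ⟨_, strictMono4 e1 e2 e3, ?_⟩
      intro a b
      fin_cases a <;> fin_cases b <;> simp <;> order
    · rintro ⟨e1, e2, e3⟩
      refine h2 ⟨_, strictMono4 e1 e2 e3, ?_⟩
      intro a b
      fin_cases a <;> fin_cases b <;> simp <;> order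
    · rintro ⟨e1, e2, e3⟩
      refine h3 ⟨_, strictMono4 e1 e2 e3, ?_⟩
      intro a b
      fin_cases a <;> fin_cases b <;> simp <;> order
  · intro h
    have key : ∀ i j k l : Fin n, π i < π j → π j < π k → π k < π l → 
      ¬ (i < j ∧ j < l ∧ l < k) ∧ ¬ (j < l ∧ l < k ∧ k < i) ∧ ¬ (k < l ∧ l < i ∧ i < j) := by
      intro i j k l h1 h2 h3
      exact h i j k l ((sub_wd π _ _ _ _).2 ⟨_, _, _, _, h1, h2, h3, by simp, by simp, by simp, by simp⟩)
    refine ⟨?_, ?_, ?_⟩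
    · rintro ⟨p, hp, hh⟩
      exact (key (p 0) (p 1) (p 3) (p 2) ((hh _ _).1 (by decide)) ((hh _ _).1 (by decide))
        ((hh _ _).1 (by decide))).1 ⟨hp (by decide), hp (by decide), hp (by decide)⟩
    · rintro ⟨p, hp, hh⟩
      exact (key (p 3) (p 0) (p 2) (p 1) ((hh _ _).1 (by decide)) ((hh _ _).1 (by decide))
        ((hh _ _).1 (by decide))).2.1 ⟨hp (by decide), hp (by decide), hp (by decide)⟩
    · rintro ⟨p, hp, hh⟩
      exact (key (p 2) (p 3) (p 0) (p 1) ((hh _ _).1 (by decide)) ((hh _ _).1 (by decide))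
        ((hh _ _).1 (by decide))).2.2 ⟨hp (by decide), hp (by decide), hp (by decide)⟩

theorem count_eq (n : ℕ) :
    avoiderCount ({![0,1,3,2], ![1,3,2,0], ![2,3,0,1]} : Set (Fin 4 → Fin 4)) n = NN n [] := by
  classical
  unfold avoiderCount
  rw [NN_nil, ← wd_image, Finset.filter_image, Finset.card_image_of_injective _ wd_inj,
    Nat.card_eq_fintype_card, Fintype.card_subtype]
  congr 1
  ext π
  simp only [Finset.mem_filter, Finset.mem_univ, true_and]
  exact av_iff π

theorem statement_1 :
    ((1 : PowerSeries ℚ) - X)^4 * (1 - 2*X) * (1 - 3*X + X^2)^2 * avoiderGF ({![0,1,3,2], ![1,3,2,0], ![2,3,0,1]} : Set (Fin 4 → Fin 4)) =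
      1 - 11*X + 51*X^2 - 129*X^3 + 195*X^4 - 183*X^5 + 104*X^6 - 30*X^7 + 3*X^8 := by
  have hr : ((1 : PowerSeries ℚ) - X)⁻¹ * (1 - X) = 1 := PowerSeries.inv_mul_cancel _ (by simp)
  have hs : ((1 : PowerSeries ℚ) - 2*X)⁻¹ * (1 - 2*X) = 1 := PowerSeries.inv_mul_cancel _ (by simp)
  have ht : ((1 : PowerSeries ℚ) - 3*X+X^2)⁻¹ * (1 - 3*X+X^2) = 1 :=
    PowerSeries.inv_mul_cancel _ (by simp)
  generalize ((1 : PowerSeries ℚ) - X)⁻¹ = r at hr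
  generalize ((1 : PowerSeries ℚ) - 2*X)⁻¹ = s at hs
  generalize ((1 : PowerSeries ℚ) - 3*X+X^2)⁻¹ = t at ht
  rw [← gf_alg X r s t hr hs ht]
  congr 1
  have : GP r s t 1 0 = (s * X * (r + X*r^3 - 2*r^2 - r) +
       (t * (1 + X^2 * t) + t * X * r) + r * X * (r^2 - (r + X*r^3))) := by
    simp [GP]
  rw [← this]
  ext n
  rw [avoiderGF, coeff_mk, count_eq]
  rcases n with _ | n
  · rw [c_zero rfl]; simp [NN]
  · rw [c_succ rfl, ← countP hr hs ht n 1 0 0 [0] SP_one, NN_one (m := 0) (s := 0)]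
    · rfl
    · exact ⟨rfl, by simp⟩
    · exact le_refl _
    · intro w hw
      constructor
      · intro _; omega
      · intro _ a b c h; simp at h
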